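/- Let μ, δ, c ∈ ℝ and 0 < ρ < 1, and let e^{μ,δ}_{1,ρ}(z) = Σ_{n=0}^∞ z^n/(Γ(n+μ)·Γ(δ−ρn)). Then for every z > 0 the function z ↦ z^{δ−1}·e^{μ,δ}_{1,ρ}(c·z^{−ρ}) is differentiable and (d/dz)( z^{δ−1}·e^{μ,δ}_{1,ρ}(c·z^{−ρ}) ) = z^{δ−2}·e^{μ,δ−1}_{1,ρ}(c·z^{−ρ}). -/

import Mathlib

/- The Wright-type function `e^{μ,δ}_{1,ρ}(z) = Σ_{n≥0} zⁿ/(Γ(n+μ)·Γ(δ−ρn))`;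
`Real.Gamma` vanishes at nonpositive integers, realizing the convention `1/Γ = 0` there. -/
noncomputable def wrightE (ρ μ δ z : ℝ) : ℝ :=
  ∑' n : ℕ, z ^ n / (Real.Gamma ((n : ℝ) + μ) * Real.Gamma (δ - ρ * n))

open Filter Topology

/-- The recurrence for the reciprocal Gamma function, valid at every real point. -/
lemma Real.sub_one_div_Gamma (s : ℝ) : (s - 1) / Real.Gamma s = 1 / Real.Gamma (s - 1) := by
  rcases eq_or_ne (s - 1) 0 with h | h
  · simp [h, Real.Gamma_zero]
  · have := Real.Gamma_add_one h
    rw [sub_add_cancel] at this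
    rw [this, div_mul_eq_div_div, div_self h]

lemma Real.abs_inv_Gamma_le {s : ℝ} (hs : s < 1) : |(Real.Gamma s)⁻¹| ≤ Real.Gamma (1 - s) := by
  have hpos : 0 < Real.Gamma (1 - s) := Real.Gamma_pos_of_pos (by linarith)
  have hrefl := Real.Gamma_mul_Gamma_one_sub s
  have hinv : (Real.Gamma s)⁻¹ = Real.Gamma (1 - s) * (Real.sin (Real.pi * s) / Real.pi) := by
    rw [← inv_div, ← hrefl, mul_inv]
    field_simp
  rw [hinv, abs_mul, abs_of_pos hpos, abs_div, abs_of_pos Real.pi_pos]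
  refine mul_le_of_le_one_right hpos.le ?_
  rw [div_le_one Real.pi_pos]
  linarith [Real.abs_sin_le_one (Real.pi * s), Real.pi_gt_three]

lemma summable_pow_mul_Gamma_rpow_neg (μ R : ℝ) (hR : 0 < R) {κ : ℝ} (hκ : 0 < κ) :
    Summable fun n : ℕ => R ^ n * Real.Gamma (n + μ) ^ (-κ) := by
  have hlim : Tendsto (fun n : ℕ => (n : ℝ) + μ) atTop atTop :=
    tendsto_atTop_add_const_right _ _ tendsto_natCast_atTop_atTop
  have hpos : ∀ᶠ n : ℕ in atTop, 0 < (n : ℝ) + μ := hlim.eventually_gt_atTop 0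
  refine summable_of_ratio_test_tendsto_lt_one zero_lt_one ?_ (l := 0) ?_
  · filter_upwards [hpos] with n hn
    exact (mul_pos (pow_pos hR n) (Real.rpow_pos_of_pos (Real.Gamma_pos_of_pos hn) _)).ne'
  · have h0 : Tendsto (fun n : ℕ => R * ((n : ℝ) + μ) ^ (-κ)) atTop (𝓝 0) := by
      simpa using ((tendsto_rpow_neg_atTop hκ).comp hlim).const_mul R
    refine h0.congr' ?_
    filter_upwards [hpos] with n hn
    have hG := Real.Gamma_pos_of_pos hn
    have hGr := Real.rpow_pos_of_pos hG (-κ)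
    have hsucc : Real.Gamma (((n + 1 : ℕ) : ℝ) + μ) = (n + μ) * Real.Gamma (n + μ) := by
      rw [← Real.Gamma_add_one hn.ne']
      congr 1
      push_cast
      ring
    rw [hsucc, Real.mul_rpow hn.le hG.le, Real.norm_of_nonneg (by positivity),
      Real.norm_of_nonneg (by positivity), pow_succ]
    field_simp

/-- By log-convexity, `Γ(ρn + a)` grows at most like `Γ(n + μ) ^ ρ`. -/
lemma exists_Gamma_le_mul_Gamma_rpow (μ a : ℝ) {ρ : ℝ} (hρ0 : 0 < ρ) (hρ1 : ρ < 1) :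
    ∃ C : ℝ, ∀ᶠ n : ℕ in atTop,
      Real.Gamma (ρ * n + a) ≤ C * Real.Gamma (n + μ) ^ ρ := by
  obtain ⟨m, hm⟩ := exists_nat_gt ((ρ * μ - a) / ρ)
  have hρ1' : 0 < 1 - ρ := sub_pos.2 hρ1
  rw [div_lt_iff₀ hρ0] at hm
  set t := (a - ρ * μ + ρ * m) / (1 - ρ)
  have htpos : 0 < t := div_pos (by linarith) hρ1'
  have hmul : (1 - ρ) * t = a - ρ * μ + ρ * m := mul_div_cancel₀ _ hρ1'.ne'
  refine ⟨Real.Gamma t ^ (1 - ρ), ?_⟩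
  have hlim : Tendsto (fun n : ℕ => (n : ℝ) + (μ - m)) atTop atTop :=
    tendsto_atTop_add_const_right _ _ tendsto_natCast_atTop_atTop
  filter_upwards [hlim.eventually_ge_atTop 2] with n hn
  have hx : 0 < (n : ℝ) + (μ - m) := by linarith
  have hle : Real.Gamma (n + (μ - m)) ≤ Real.Gamma (n + μ) := by
    have hm0 : (0 : ℝ) ≤ m := m.cast_nonneg
    exact Real.Gamma_strictMonoOn_Ici.monotoneOn hn (Set.mem_Ici.2 (by linarith)) (by linarith)
  have key := Real.Gamma_mul_add_mul_le_rpow_Gamma_mul_rpow_Gamma hx htpos hρ0 hρ1' (by ring)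
  have harg : ρ * ((n : ℝ) + (μ - m)) + (1 - ρ) * t = ρ * n + a := by
    rw [hmul]
    ring
  rw [harg] at key
  refine key.trans ?_
  rw [mul_comm]
  have hGx := (Real.Gamma_pos_of_pos hx).le
  have hGt := (Real.Gamma_pos_of_pos htpos).le
  gcongr

/-- The series defining `wrightE` converges absolutely everywhere. -/
lemma summable_abs_wrightE_term (μ δ z : ℝ) {ρ : ℝ} (hρ0 : 0 < ρ) (hρ1 : ρ < 1) :
    Summable fun n : ℕ =>
      |z ^ n / (Real.Gamma ((n : ℝ) + μ) * Real.Gamma (δ - ρ * n))| := by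
  obtain ⟨C, hC⟩ := exists_Gamma_le_mul_Gamma_rpow μ (1 - δ) hρ0 hρ1
  have hR : 0 < |z| + 1 := by positivity
  have hsum := (summable_pow_mul_Gamma_rpow_neg μ (|z| + 1) hR (sub_pos.2 hρ1)).mul_left C
  refine summable_of_isBigO_nat hsum (Asymptotics.IsBigO.of_bound 1 ?_)
  have hlim : Tendsto (fun n : ℕ => (n : ℝ) + μ) atTop atTop :=
    tendsto_atTop_add_const_right _ _ tendsto_natCast_atTop_atTop
  have hlim' : Tendsto (fun n : ℕ => ρ * (n : ℝ) + (1 - δ)) atTop atTop :=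
    tendsto_atTop_add_const_right _ _ (tendsto_natCast_atTop_atTop.const_mul_atTop hρ0)
  filter_upwards [hC, hlim.eventually_gt_atTop 0, hlim'.eventually_gt_atTop 0] with n hn hμ hδ
  have hG := Real.Gamma_pos_of_pos hμ
  have hinv : |(Real.Gamma (δ - ρ * n))⁻¹| ≤ C * Real.Gamma (n + μ) ^ ρ := by
    refine (Real.abs_inv_Gamma_le (by linarith)).trans (le_of_eq_of_le ?_ hn)
    congr 1
    ring
  have hpow : |z| ^ n ≤ (|z| + 1) ^ n := by
    gcongr
    linarith
  rw [one_mul, Real.norm_eq_abs, abs_abs]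
  refine le_trans ?_ (le_abs_self _)
  calc |z ^ n / (Real.Gamma (n + μ) * Real.Gamma (δ - ρ * n))|
      = |z| ^ n * ((Real.Gamma (n + μ))⁻¹ * |(Real.Gamma (δ - ρ * n))⁻¹|) := by
        rw [div_eq_mul_inv, mul_inv, abs_mul, abs_mul, abs_pow, abs_of_pos (inv_pos.2 hG)]
    _ ≤ (|z| + 1) ^ n * ((Real.Gamma (n + μ))⁻¹ * (C * Real.Gamma (n + μ) ^ ρ)) := by
        gcongr
    _ = C * ((|z| + 1) ^ n * Real.Gamma (n + μ) ^ (-(1 - ρ))) := by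
        rw [neg_sub, Real.rpow_sub_one hG.ne']
        ring

lemma rpow_mul_mul_rpow_neg_pow (c ρ a : ℝ) (n : ℕ) {w : ℝ} (hw : 0 < w) :
    w ^ a * (c * w ^ (-ρ)) ^ n = c ^ n * w ^ (a - ρ * n) := by
  rw [mul_pow, ← Real.rpow_mul_natCast hw.le, sub_eq_add_neg, Real.rpow_add hw, neg_mul]
  ring

lemma hasDerivAt_wrightE_term (μ δ c ρ : ℝ) (n : ℕ) {w : ℝ} (hw : 0 < w) :
    HasDerivAt
      (fun w : ℝ => w ^ (δ - 1) *
        ((c * w ^ (-ρ)) ^ n / (Real.Gamma ((n : ℝ) + μ) * Real.Gamma (δ - ρ * n))))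
      (w ^ (δ - 2) *
        ((c * w ^ (-ρ)) ^ n / (Real.Gamma ((n : ℝ) + μ) * Real.Gamma (δ - 1 - ρ * n)))) w := by
  have h := (Real.hasDerivAt_rpow_const (p := δ - 1 - ρ * n) (Or.inl hw.ne')).const_mul
    (c ^ n / (Real.Gamma ((n : ℝ) + μ) * Real.Gamma (δ - ρ * n)))
  refine (h.congr_of_eventuallyEq ?_).congr_deriv ?_
  · filter_upwards [lt_mem_nhds hw] with x hx
    rw [← mul_div_assoc, rpow_mul_mul_rpow_neg_pow c ρ _ n hx]
    ring
  · have hrec := Real.sub_one_div_Gamma (δ - ρ * n)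
    rw [show δ - ρ * n - 1 = δ - 1 - ρ * n by ring] at hrec
    rw [← mul_div_assoc, rpow_mul_mul_rpow_neg_pow c ρ _ n hw,
      show δ - 1 - ρ * n - 1 = δ - 2 - ρ * n by ring]
    calc _ = c ^ n * w ^ (δ - 2 - ρ * n) / Real.Gamma (n + μ) *
          ((δ - 1 - ρ * n) / Real.Gamma (δ - ρ * n)) := by
            simp only [div_eq_mul_inv, mul_inv]
            ring
      _ = _ := by
            rw [hrec]
            simp only [div_eq_mul_inv, mul_inv]
            ring

lemma rpow_le_rpow_add_rpow {a b w : ℝ} (p : ℝ) (ha : 0 < a) (haw : a ≤ w) (hwb : w ≤ b) :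
    w ^ p ≤ a ^ p + b ^ p := by
  have hw := ha.trans_le haw
  have hap := Real.rpow_nonneg ha.le p
  have hbp := Real.rpow_nonneg (hw.le.trans hwb) p
  rcases le_total 0 p with hp | hp
  · linarith [Real.rpow_le_rpow hw.le hwb hp]
  · linarith [Real.rpow_le_rpow_of_nonpos ha haw hp]

/- STATEMENT 11: fourth differentiation formula in (3.2):
`(d/dz)( z^{δ−1}·e^{μ,δ}_{1,ρ}(c·z^{−ρ}) ) = z^{δ−2}·e^{μ,δ−1}_{1,ρ}(c·z^{−ρ})` for `z > 0`. -/
theorem wright_power_deriv_neg_exponent (μ δ c ρ : ℝ) (hρ0 : 0 < ρ) (hρ1 : ρ < 1)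
    (z : ℝ) (hz : 0 < z) :
    HasDerivAt (fun w : ℝ => w ^ (δ - 1) * wrightE ρ μ δ (c * w ^ (-ρ)))
      (z ^ (δ - 2) * wrightE ρ μ (δ - 1) (c * z ^ (-ρ))) z := by
  simp only [wrightE, ← tsum_mul_left]
  have hz2 : 0 < z / 2 := half_pos hz
  have hmem : z ∈ Set.Ioo (z / 2) (2 * z) := ⟨by linarith, by linarith⟩
  have hsum := (summable_abs_wrightE_term μ (δ - 1) (c * (z / 2) ^ (-ρ)) hρ0 hρ1).mul_left
    ((z / 2) ^ (δ - 2) + (2 * z) ^ (δ - 2))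
  refine hasDerivAt_tsum_of_isPreconnected hsum isOpen_Ioo isPreconnected_Ioo
    (fun n w hw => hasDerivAt_wrightE_term μ δ c ρ n (hz2.trans hw.1)) (fun n w hw => ?_) hmem
    ((summable_abs_wrightE_term μ δ _ hρ0 hρ1).of_abs.mul_left _) hmem
  have hw0 : 0 < w := hz2.trans hw.1
  have hbase : w ^ (-ρ) ≤ (z / 2) ^ (-ρ) :=
    Real.rpow_le_rpow_of_nonpos hz2 hw.1.le (neg_nonpos.2 hρ0.le)
  have hfac := rpow_le_rpow_add_rpow (δ - 2) hz2 hw.1.le hw.2.le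
  rw [Real.norm_eq_abs, abs_mul, abs_of_pos (Real.rpow_pos_of_pos hw0 _), abs_div, abs_div,
    abs_pow, abs_pow, abs_mul, abs_mul c, abs_of_pos (Real.rpow_pos_of_pos hw0 _),
    abs_of_pos (Real.rpow_pos_of_pos hz2 _)]
  gcongr
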